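/- Let λ ∈ ℂ*, a, b ∈ ℂ, and let W ∈ O_𝔚 be a nontrivial simple highest weight 𝔚-module with highest weight b'. Then the Virasoro module L(W, λ, a, b) is simple if and only if either (λ ∉ {1, −1} and b ≠ 1), or (λ = −1, b ≠ 1 and b ≠ b' + 1). -/

import Mathlib

/-- A representation of the Witt algebra `𝔚 = span{d_i : i ≥ -1}`, encoded by the family of
operators `d i` (only the indices `i ≥ -1` are relevant) satisfying
`[d_m, d_n] = (n - m) d_{m+n}`. -/
structure WittRep (W : Type*) [AddCommGroup W] [Module ℂ W] where
  d : ℤ → W →ₗ[ℂ] W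
  comm : ∀ m n : ℤ, -1 ≤ m → -1 ≤ n →
    d m ∘ₗ d n - d n ∘ₗ d m = (((n - m : ℤ) : ℂ)) • d (m + n)

namespace WittRep

variable {W : Type*} [AddCommGroup W] [Module ℂ W]

/-- Condition A : the module lies in the category `O_𝔚`. -/
def InO (ρ : WittRep W) : Prop :=
  ∀ v : W, ∃ n : ℕ, ∀ i : ℤ, (n : ℤ) ≤ i → ρ.d i v = 0

/-- The module is trivial: the Lie algebra acts by zero. -/
def IsTrivial (ρ : WittRep W) : Prop := ∀ i : ℤ, -1 ≤ i → ρ.d i = 0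

/-- A `𝔚`-submodule. -/
def Invariant (ρ : WittRep W) (U : Submodule ℂ W) : Prop :=
  ∀ i : ℤ, -1 ≤ i → ∀ u ∈ U, ρ.d i u ∈ U

/-- Simplicity of a `𝔚`-module. -/
def IsSimple (ρ : WittRep W) : Prop :=
  (∃ v : W, v ≠ 0) ∧ ∀ U : Submodule ℂ W, ρ.Invariant U → U = ⊥ ∨ U = ⊤

/-- A `𝔟`-submodule (`𝔟 = span{d_i : i ≥ 0}`). -/
def BInvariant (ρ : WittRep W) (U : Submodule ℂ W) : Prop :=
  ∀ i : ℤ, 0 ≤ i → ∀ u ∈ U, ρ.d i u ∈ U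

/-- The socle `Soc_𝔟(W)`: the sum of the minimal nonzero `𝔟`-submodules. -/
def Soc (ρ : WittRep W) : Submodule ℂ W :=
  sSup {U | ρ.BInvariant U ∧ U ≠ ⊥ ∧
    ∀ U' : Submodule ℂ W, ρ.BInvariant U' → U' ≠ ⊥ → U' ≤ U → U' = U}

/-- `w₀` is a highest weight vector of weight `b'`. -/
def IsHW (ρ : WittRep W) (w₀ : W) (b' : ℂ) : Prop :=
  w₀ ≠ 0 ∧ ρ.d 0 w₀ = b' • w₀ ∧ ∀ i : ℤ, 1 ≤ i → ρ.d i w₀ = 0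

/-- `w₀` generates the `𝔚`-module. -/
def Generates (ρ : WittRep W) (w₀ : W) : Prop :=
  ∀ U : Submodule ℂ W, ρ.Invariant U → w₀ ∈ U → U = ⊤

/-- The operator `e^{kt} d/dt = Σ_{i ≥ 0} (k^i/i!) d_{i-1}` (a finite sum on each vector of a
module in `O_𝔚`). -/
noncomputable def E (ρ : WittRep W) (k : ℤ) (w : W) : W :=
  ∑ᶠ i : ℕ, (((k : ℂ) ^ i) / (Nat.factorial i : ℂ)) • ρ.d ((i : ℤ) - 1) w

/-- The action of `d_k` on `L(W, λ, a, b) = W ⊗ ℂ[t, t⁻¹]`, realized on `ℤ →₀ W`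
(`w ⊗ t^j ↦ Finsupp.single j w`):
`d_k · (w ⊗ t^j) = ((λ^k e^{kt} − 1) d/dt + a + kb + j) w ⊗ t^{k+j}`. -/
noncomputable def Lact (ρ : WittRep W) (lam a b : ℂ) (k : ℤ) (f : ℤ →₀ W) : ℤ →₀ W :=
  f.sum fun j w => Finsupp.single (k + j)
    (lam ^ k • ρ.E k w - ρ.d (-1) w + (a + (k : ℂ) * b + (j : ℂ)) • w)

/-- The PBW map `ℕ →₀ ℂ → W`, `(k, c) ↦ c • d_{-1}^k w₀`. -/
noncomputable def pbwMap (ρ : WittRep W) (w₀ : W) : (ℕ →₀ ℂ) →ₗ[ℂ] W :=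
  Finsupp.lsum ℂ fun k : ℕ => ((ρ.d (-1)) ^ k) ∘ₗ LinearMap.toSpanSingleton ℂ W w₀

/-- `W` is the Verma `𝔚`-module with highest weight vector `w₀` of highest weight `b'`. -/
def IsVerma (ρ : WittRep W) (w₀ : W) (b' : ℂ) : Prop :=
  ρ.d 0 w₀ = b' • w₀ ∧ (∀ i : ℤ, 1 ≤ i → ρ.d i w₀ = 0) ∧
    Function.Bijective (ρ.pbwMap w₀)

/-- `W^{(n)} = Σ_{i=0}^n d_{-1}^i (Soc_𝔟 W)`. -/
noncomputable def Wn (ρ : WittRep W) (n : ℕ) : Submodule ℂ W :=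
  ⨆ i : Fin (n + 1), Submodule.map ((ρ.d (-1)) ^ (i : ℕ)) ρ.Soc

/-- `L₀(a, b') = span{d₁^i · (w₀ ⊗ t^{2j})} ⊆ L(W, -1, a, b' + 1)`. -/
noncomputable def Lzero (ρ : WittRep W) (a b' : ℂ) (w₀ : W) : Submodule ℂ (ℤ →₀ W) :=
  Submodule.span ℂ
    {g | ∃ (i : ℕ) (j : ℤ), g = (ρ.Lact (-1) a (b' + 1) 1)^[i] (Finsupp.single (2 * j) w₀)}

/-- `L₁(a, b') = span{d₁^i · (w₀ ⊗ t^{2j+1})} ⊆ L(W, -1, a, b' + 1)`. -/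
noncomputable def Lone (ρ : WittRep W) (a b' : ℂ) (w₀ : W) : Submodule ℂ (ℤ →₀ W) :=
  Submodule.span ℂ
    {g | ∃ (i : ℕ) (j : ℤ), g = (ρ.Lact (-1) a (b' + 1) 1)^[i] (Finsupp.single (2 * j + 1) w₀)}

end WittRep

/-- A representation of the Lie algebra `𝔟 = span{d_i : i ≥ 0}`. -/
structure BRep (B : Type*) [AddCommGroup B] [Module ℂ B] where
  d : ℕ → B →ₗ[ℂ] B
  comm : ∀ m n : ℕ, d m ∘ₗ d n - d n ∘ₗ d m = (((n : ℂ) - (m : ℂ))) • d (m + n)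

namespace BRep

variable {B : Type*} [AddCommGroup B] [Module ℂ B]

/-- Condition A : the module lies in the category `O_𝔟`. -/
def InO (ρ : BRep B) : Prop := ∀ v : B, ∃ n : ℕ, ∀ i : ℕ, n ≤ i → ρ.d i v = 0

def IsTrivial (ρ : BRep B) : Prop := ∀ i : ℕ, ρ.d i = 0

def IsSimple (ρ : BRep B) : Prop :=
  (∃ v : B, v ≠ 0) ∧
    ∀ U : Submodule ℂ B, (∀ i : ℕ, ∀ u ∈ U, ρ.d i u ∈ U) → U = ⊥ ∨ U = ⊤

/-- The set of `r ∈ ℤ≥0` such that `d_{r+i} v = 0` for all `i ≥ 1`;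
`ord_𝔟(v)` is its least element. -/
def ordSet (ρ : BRep B) (v : B) : Set ℕ := {r : ℕ | ∀ i : ℕ, r + 1 ≤ i → ρ.d i v = 0}

/-- The action of `d_m` on the Virasoro module `N(B_(c), a) = B ⊗ ℂ[t, t⁻¹]`, realized on
`ℤ →₀ B`:  `d_m · (w ⊗ t^j) = (Σ_{i≥1} (m^i/i!) d_{i-1} + mc + a + j) w ⊗ t^{m+j}`
(`c` is the twist of the `d₀`-action; `c = 0` gives `N(B, a)`). -/
noncomputable def Nact (ρ : BRep B) (a c : ℂ) (m : ℤ) (f : ℤ →₀ B) : ℤ →₀ B :=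
  f.sum fun j w => Finsupp.single (m + j)
    ((∑ᶠ i : ℕ, (((m : ℂ) ^ (i + 1)) / (Nat.factorial (i + 1) : ℂ)) • ρ.d i w) +
      ((m : ℂ) * c + a + (j : ℂ)) • w)

end BRep

/-- For a family `U : ℤ → Submodule ℂ W`, the subspace `⊕_j U j ⊗ t^j` of `W ⊗ ℂ[t,t⁻¹]`. -/
def gradedSub {W : Type*} [AddCommGroup W] [Module ℂ W] (U : ℤ → Submodule ℂ W) :
    Submodule ℂ (ℤ →₀ W) where
  carrier := {f | ∀ j, f j ∈ U j}
  add_mem' := fun hf hg j => by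
    simpa only [Finsupp.add_apply] using (U j).add_mem (hf j) (hg j)
  zero_mem' := fun j => by simp
  smul_mem' := fun c f hf j => by
    simpa only [Finsupp.smul_apply] using (U j).smul_mem c (hf j)

/-- A submodule invariant under a (ℤ-indexed) family of operators. -/
def ActInvariant {V : Type*} [AddCommGroup V] [Module ℂ V] (act : ℤ → V → V)
    (M : Submodule ℂ V) : Prop :=
  ∀ k : ℤ, ∀ u ∈ M, act k u ∈ M

/-- Simplicity of the module given by a family of operators (the central element acts by zero). -/
def ActSimple {V : Type*} [AddCommGroup V] [Module ℂ V] (act : ℤ → V → V) : Prop :=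
  (∃ v : V, v ≠ 0) ∧ ∀ M : Submodule ℂ V, ActInvariant act M → M = ⊥ ∨ M = ⊤

/-- A representation of the Virasoro algebra. -/
structure VirasoroRep (V : Type*) [AddCommGroup V] [Module ℂ V] where
  d : ℤ → V →ₗ[ℂ] V
  z : V →ₗ[ℂ] V
  comm : ∀ m n : ℤ, d m ∘ₗ d n - d n ∘ₗ d m =
    (((n - m : ℤ) : ℂ)) • d (m + n) +
      (if m + n = 0 then (((n : ℂ) ^ 3 - (n : ℂ)) / 12) else 0) • z
  comm_z : ∀ m : ℤ, d m ∘ₗ z = z ∘ₗ d m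

open Polynomial in
/-- The sequence `m ↦ μ ^ m * P(m)` is a generalized eigenvector of the shift. -/
theorem shift_sub_pow_exp_mul_eval {μ : ℂ} (hμ : μ ≠ 0) (n : ℕ) (P : ℂ[X])
    (hP : P.degree < n) :
    ((LinearMap.funLeft ℂ ℂ (fun m : ℤ => m + 1) - μ • (1 : Module.End ℂ (ℤ → ℂ))) ^ n)
      (fun m : ℤ => μ ^ m * P.eval (m : ℂ)) = 0 := by
  induction n generalizing P with
  | zero =>
    have : P = 0 := by simpa [Polynomial.degree_lt_iff_coeff_zero] using hP
    ext m
    simp [this]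
  | succ n ih =>
    rw [pow_succ, Module.End.mul_apply]
    have hstep : (LinearMap.funLeft ℂ ℂ (fun m : ℤ => m + 1) -
        μ • (1 : Module.End ℂ (ℤ → ℂ))) (fun m : ℤ => μ ^ m * P.eval (m : ℂ)) =
        fun m : ℤ => μ ^ m * (C μ * (taylor 1 P - P)).eval (m : ℂ) := by
      ext m
      simp [LinearMap.funLeft_apply, zpow_add₀ hμ, taylor_eval]
      ring
    rw [hstep]
    apply ih
    by_cases h0 : P = 0
    · simp [h0]
    · rw [degree_C_mul hμ]
      have hlt : (taylor 1 P - P).degree < P.degree := by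
        rw [← degree_taylor P 1]
        exact degree_sub_lt_left (degree_taylor P 1) (by simpa using h0) (by simp)
      rw [Nat.cast_succ] at hP
      exact lt_of_lt_of_le hlt (Order.le_of_lt_succ (by simpa [Nat.cast_withBot] using hP))

open Polynomial in
/-- Linear independence of exponential polynomials with distinct bases. -/
theorem exp_polynomial_eq_zero {ι : Type*} [Fintype ι] {μ : ι → ℂ}
    (hinj : Function.Injective μ) (hne : ∀ i, μ i ≠ 0) (P : ι → ℂ[X])
    (h : ∀ m : ℤ, ∑ i, μ i ^ m * (P i).eval (m : ℂ) = 0) (i : ι) : P i = 0 := by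
  have hind := (Module.End.independent_maxGenEigenspace
    (LinearMap.funLeft ℂ ℂ (fun m : ℤ => m + 1))).comp hinj
  have hmem : ∀ i, (fun m : ℤ => μ i ^ m * (P i).eval (m : ℂ)) ∈
      (Module.End.maxGenEigenspace (LinearMap.funLeft ℂ ℂ (fun m : ℤ => m + 1)) ∘ μ) i := by
    intro i
    refine Module.End.mem_maxGenEigenspace _ _ _ |>.2 ⟨(P i).natDegree + 1, ?_⟩
    apply shift_sub_pow_exp_mul_eval (hne i)
    exact lt_of_le_of_lt degree_le_natDegree (by exact_mod_cast Nat.lt_succ_self _)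
  have hz := iSupIndep_iff_finsetSum_eq_zero_imp_eq_zero _ |>.1 hind Finset.univ _
    (fun i _ => hmem i) (by ext m; simpa using h m) i (Finset.mem_univ i)
  apply Polynomial.eq_zero_of_infinite_isRoot
  refine (Set.infinite_range_of_injective (Int.cast_injective (α := ℂ))).mono ?_
  rintro _ ⟨m, rfl⟩
  have := congrFun hz m
  simpa [zpow_ne_zero, hne i] using this

open Polynomial in
/-- If an exponential polynomial with values in `ℂ[X]` stays in a subspace, then so do all its
coefficients. -/
theorem coeff_mem_of_exp_polynomial_mem {ι : Type*} [Fintype ι] {μ : ι → ℂ}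
    (hinj : Function.Injective μ) (hne : ∀ i, μ i ≠ 0) (F : ι → ℂ[X][X]) (U : Submodule ℂ ℂ[X])
    (h : ∀ m : ℤ, ∑ i, μ i ^ m • (F i).eval (C (m : ℂ)) ∈ U) (i : ι) (n : ℕ) :
    (F i).coeff n ∈ U := by
  by_contra hn
  obtain ⟨φ, hφ, hU⟩ := Submodule.exists_le_ker_of_notMem hn
  let P : ι → ℂ[X] := fun i => ∑ l ∈ Finset.range ((F i).natDegree + 1),
    monomial l (φ ((F i).coeff l))
  have hP : ∀ i (m : ℤ), (P i).eval (m : ℂ) = φ ((F i).eval (C (m : ℂ))) := by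
    intro i m
    rw [eval_eq_sum_range (p := F i), map_sum, eval_finsetSum]
    refine Finset.sum_congr rfl fun l _ => ?_
    rw [eval_monomial, ← C_pow, mul_comm (coeff _ _), ← smul_eq_C_mul, map_smul, smul_eq_mul,
      mul_comm]
  have hz := exp_polynomial_eq_zero hinj hne P (fun m => by
    have := hU (h m)
    rw [LinearMap.mem_ker, map_sum] at this
    rw [← this]
    exact Finset.sum_congr rfl fun i _ => by rw [hP, map_smul, smul_eq_mul]) i
  have hc := congrArg (fun Q => coeff Q n) hz
  simp only [P, finsetSum_coeff, coeff_monomial, coeff_zero] at hc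
  rw [Finset.sum_ite_eq' ] at hc
  split_ifs at hc with hlt
  · exact hφ hc
  · apply hφ
    rw [coeff_eq_zero_of_natDegree_lt (by simpa using hlt), map_zero]

open Polynomial in
theorem natDegree_map_C_comp_linear_le (p : ℂ[X]) {u v : ℂ[X]} (hv : v ≠ 0) :
    ((p.map C).comp (C v * X + C u)).natDegree ≤ p.natDegree := by
  rw [natDegree_comp, natDegree_linear hv, mul_one]
  exact natDegree_map_le

open Polynomial in
theorem coeff_map_C_comp_linear (p : ℂ[X]) {u v : ℂ[X]} (hv : v ≠ 0) :
    ((p.map C).comp (C v * X + C u)).coeff p.natDegree = C p.leadingCoeff * v ^ p.natDegree := by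
  have h := coeff_comp_degree_mul_degree (p := p.map C) (q := C v * X + C u)
    (by rw [natDegree_linear hv]; exact one_ne_zero)
  rwa [natDegree_linear hv, mul_one, leadingCoeff_linear hv,
    leadingCoeff_map_of_injective C_injective, natDegree_map_eq_of_injective C_injective] at h

open Polynomial in
theorem coeff_linear_mul_map_C_comp (p : ℂ[X]) {u v : ℂ[X]} (hv : v ≠ 0) (α β : ℂ[X]) :
    ((C α * X + C β) * (p.map C).comp (C v * X + C u)).coeff (1 + p.natDegree) =
      α * (C p.leadingCoeff * v ^ p.natDegree) := by
  rw [coeff_mul_add_eq_of_natDegree_le natDegree_linear_le (natDegree_map_C_comp_linear_le p hv),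
    coeff_map_C_comp_linear p hv]
  simp

open Polynomial in
theorem coeff_linear_mul_linear_mul_map_C_comp (p : ℂ[X]) {u v : ℂ[X]} (hv : v ≠ 0)
    (α β γ δ : ℂ[X]) :
    ((C α * X + C β) * ((C γ * X + C δ) * (p.map C).comp (C v * X + C u))).coeff
      (1 + (1 + p.natDegree)) = α * (γ * (C p.leadingCoeff * v ^ p.natDegree)) := by
  rw [coeff_mul_add_eq_of_natDegree_le natDegree_linear_le
    (natDegree_mul_le.trans (add_le_add natDegree_linear_le (natDegree_map_C_comp_linear_le p hv))),
    coeff_linear_mul_map_C_comp p hv]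
  simp

namespace WittRep

variable {W : Type*} [AddCommGroup W] [Module ℂ W] (ρ : WittRep W)

theorem d_d_neg_one {i : ℤ} (hi : -1 ≤ i) (w : W) :
    ρ.d i (ρ.d (-1) w) = ρ.d (-1) (ρ.d i w) - ((i : ℂ) + 1) • ρ.d (i - 1) w := by
  have h := LinearMap.congr_fun (ρ.comm i (-1) hi le_rfl) w
  simp only [LinearMap.sub_apply, LinearMap.comp_apply, LinearMap.smul_apply] at h
  rw [sub_eq_iff_eq_add.1 h, ← sub_eq_add_neg i 1]
  push_cast
  module

theorem E_eq_sum {w : W} {N n : ℕ} (hN : ∀ i : ℤ, (N : ℤ) ≤ i → ρ.d i w = 0) (hn : N < n)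
    (k : ℤ) : ρ.E k w =
      ∑ i ∈ Finset.range n, (((k : ℂ) ^ i) / (Nat.factorial i : ℂ)) • ρ.d ((i : ℤ) - 1) w := by
  refine finsum_eq_sum_of_support_subset _ fun i hi => ?_
  by_contra hi'
  simp only [Finset.coe_range, Set.mem_Iio, not_lt] at hi'
  exact hi (by simp only [hN ((i : ℤ) - 1) (by omega), smul_zero])

variable {ρ}

theorem InO.exists_bound (hO : ρ.InO) (u v : W) : ∃ N : ℕ,
    (∀ i : ℤ, (N : ℤ) ≤ i → ρ.d i u = 0) ∧ ∀ i : ℤ, (N : ℤ) ≤ i → ρ.d i v = 0 := by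
  obtain ⟨m, hm⟩ := hO u
  obtain ⟨n, hn⟩ := hO v
  exact ⟨max m n, fun i hi => hm i (by push_cast at hi; omega),
    fun i hi => hn i (by push_cast at hi; omega)⟩

theorem E_add (hO : ρ.InO) (k : ℤ) (u v : W) : ρ.E k (u + v) = ρ.E k u + ρ.E k v := by
  obtain ⟨N, hu, hv⟩ := hO.exists_bound u v
  rw [ρ.E_eq_sum hu N.lt_succ_self, ρ.E_eq_sum hv N.lt_succ_self,
    ρ.E_eq_sum (N := N) (fun i hi => by rw [map_add, hu i hi, hv i hi, add_zero]) N.lt_succ_self,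
    ← Finset.sum_add_distrib]
  simp only [map_add, smul_add]

theorem E_smul (hO : ρ.InO) (k : ℤ) (c : ℂ) (u : W) : ρ.E k (c • u) = c • ρ.E k u := by
  obtain ⟨N, hu⟩ := hO u
  rw [ρ.E_eq_sum hu N.lt_succ_self,
    ρ.E_eq_sum (N := N) (fun i hi => by rw [map_smul, hu i hi, smul_zero]) N.lt_succ_self,
    Finset.smul_sum]
  simp only [map_smul, smul_comm c]

theorem E_zero_apply (hO : ρ.InO) (w : W) : ρ.E 0 w = ρ.d (-1) w := by
  obtain ⟨N, hw⟩ := hO w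
  rw [ρ.E_eq_sum hw N.lt_succ_self, Finset.sum_range_succ']
  simp

theorem E_d_neg_one (hO : ρ.InO) (k : ℤ) (w : W) :
    ρ.E k (ρ.d (-1) w) = ρ.d (-1) (ρ.E k w) - (k : ℂ) • ρ.E k w := by
  obtain ⟨N, hw, hw'⟩ := hO.exists_bound w (ρ.d (-1) w)
  rw [ρ.E_eq_sum hw' (n := N + 2) (by omega)]
  nth_rewrite 1 [ρ.E_eq_sum hw (n := N + 2) (by omega)]
  rw [ρ.E_eq_sum hw (n := N + 1) (by omega), map_sum, Finset.smul_sum, eq_sub_iff_add_eq,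
    Finset.sum_range_succ' _ (N + 1), Finset.sum_range_succ' _ (N + 1), add_right_comm,
    ← Finset.sum_add_distrib]
  refine congrArg₂ (· + ·) (Finset.sum_congr rfl fun i _ => ?_) ?_
  · rw [ρ.d_d_neg_one (by omega), map_smul, smul_sub, smul_smul, smul_smul]
    have hidx : ((i + 1 : ℕ) : ℤ) - 1 - 1 = (i : ℤ) - 1 := by push_cast; ring
    have hcoeff : (k : ℂ) ^ (i + 1) / ((i + 1).factorial : ℂ) *
        ((((i + 1 : ℕ) : ℤ) - 1 : ℤ) + 1 : ℂ) = k * (k ^ i / (i.factorial : ℂ)) := by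
      have h1 : (i.factorial : ℂ) ≠ 0 := by exact_mod_cast i.factorial_ne_zero
      have h2 : (i + 1 : ℂ) ≠ 0 := by exact_mod_cast i.succ_ne_zero
      rw [Nat.factorial_succ]
      push_cast
      field_simp
      ring
    rw [hidx, hcoeff, sub_add_cancel]
  · simp

theorem IsHW.E_apply {w₀ : W} {b' : ℂ} (hhw : ρ.IsHW w₀ b') (k : ℤ) :
    ρ.E k w₀ = ρ.d (-1) w₀ + ((k : ℂ) * b') • w₀ := by
  rw [ρ.E_eq_sum (N := 1) (n := 2) (fun i hi => hhw.2.2 i (by exact_mod_cast hi)) one_lt_two]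
  simp [Finset.sum_range_succ, hhw.2.1, smul_smul]

variable (ρ)

open Polynomial in
/-- The map `p ↦ p(d_{-1}) w`. -/
noncomputable def orbitMap (w : W) : ℂ[X] →ₗ[ℂ] W :=
  LinearMap.applyₗ w ∘ₗ (aeval (ρ.d (-1))).toLinearMap

theorem orbitMap_apply (w : W) (p : Polynomial ℂ) :
    ρ.orbitMap w p = Polynomial.aeval (ρ.d (-1)) p w := rfl

theorem orbitMap_one (w : W) : ρ.orbitMap w 1 = w := by
  simp [orbitMap_apply]

theorem orbitMap_C (w : W) (c : ℂ) : ρ.orbitMap w (Polynomial.C c) = c • w := by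
  simp [orbitMap_apply, Module.algebraMap_end_apply]

theorem orbitMap_X_mul (w : W) (p : Polynomial ℂ) :
    ρ.orbitMap w (Polynomial.X * p) = ρ.d (-1) (ρ.orbitMap w p) := by
  simp [orbitMap_apply, Module.End.mul_apply]

theorem orbitMap_X (w : W) : ρ.orbitMap w Polynomial.X = ρ.d (-1) w := by
  simp [orbitMap_apply]

theorem orbitMap_C_mul (w : W) (c : ℂ) (p : Polynomial ℂ) :
    ρ.orbitMap w (Polynomial.C c * p) = c • ρ.orbitMap w p := by
  rw [← Polynomial.smul_eq_C_mul, map_smul]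

/-- The `d_{-1}`-orbit of `u` spans a submodule as soon as it contains every `d_i u`. -/
theorem invariant_range_orbitMap {u : W}
    (hu : ∀ i : ℤ, -1 ≤ i → ρ.d i u ∈ LinearMap.range (ρ.orbitMap u)) :
    ρ.Invariant (LinearMap.range (ρ.orbitMap u)) := by
  have hD : ∀ w ∈ LinearMap.range (ρ.orbitMap u), ρ.d (-1) w ∈ LinearMap.range (ρ.orbitMap u) := by
    rintro _ ⟨p, rfl⟩
    exact ⟨_, ρ.orbitMap_X_mul u p⟩
  rintro i hi _ ⟨p, rfl⟩
  induction p using Polynomial.induction_on' with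
  | add p q hp hq => rw [map_add, map_add]; exact add_mem hp hq
  | monomial n c =>
    induction n generalizing i with
    | zero =>
      rw [Polynomial.monomial_zero_left, orbitMap_C, map_smul]
      exact Submodule.smul_mem _ _ (hu i hi)
    | succ n ih =>
      rw [← Polynomial.X_mul_monomial, orbitMap_X_mul, ρ.d_d_neg_one hi]
      refine sub_mem (hD _ (ih i hi)) ?_
      rcases hi.eq_or_lt with rfl | hi'
      · simp
      · exact Submodule.smul_mem _ _ (ih (i - 1) (by omega))

variable {ρ}

open Polynomial in
/-- On `p(d_{-1}) w₀`, the operator `e^{kt} d/dt` is the difference operator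
`p ↦ (X + k b') p(X - k)`. -/
theorem IsHW.E_orbitMap (hO : ρ.InO) {w₀ : W} {b' : ℂ} (hhw : ρ.IsHW w₀ b') (k : ℤ) (p : ℂ[X]) :
    ρ.E k (ρ.orbitMap w₀ p) =
      ρ.orbitMap w₀ ((X + C ((k : ℂ) * b')) * p.comp (X - C (k : ℂ))) := by
  induction p using Polynomial.induction_on' with
  | add p q hp hq => rw [map_add, E_add hO, hp, hq, add_comp, mul_add, map_add]
  | monomial n c =>
    induction n with
    | zero =>
      rw [monomial_zero_left, orbitMap_C, E_smul hO, hhw.E_apply, C_comp, mul_comm (X + _),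
        orbitMap_C_mul, map_add, orbitMap_X, orbitMap_C]
    | succ n ih =>
      rw [← X_mul_monomial, orbitMap_X_mul, E_d_neg_one hO, ih, ← orbitMap_X_mul,
        ← orbitMap_C_mul, ← map_sub, mul_comp, X_comp]
      congr 1
      ring

theorem IsHW.range_orbitMap (hs : ρ.IsSimple) {w₀ : W} {b' : ℂ} (hhw : ρ.IsHW w₀ b') :
    LinearMap.range (ρ.orbitMap w₀) = ⊤ := by
  refine (hs.2 _ (ρ.invariant_range_orbitMap fun i hi => ?_)).resolve_left fun h => hhw.1 ?_
  · rcases lt_trichotomy i 0 with h | rfl | h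
    · obtain rfl : i = -1 := by omega
      exact ⟨_, ρ.orbitMap_X w₀⟩
    · exact ⟨Polynomial.C b', by rw [orbitMap_C, hhw.2.1]⟩
    · rw [hhw.2.2 i h]
      exact zero_mem _
  · have hmem : w₀ ∈ LinearMap.range (ρ.orbitMap w₀) := ⟨1, ρ.orbitMap_one w₀⟩
    rwa [h, Submodule.mem_bot] at hmem

open Polynomial in
/-- The coefficients in `k` of `(X + k b') p(X - k)` annihilate `w₀` if `p` does. -/
theorem IsHW.coeff_mem_ker_orbitMap (hO : ρ.InO) {w₀ : W} {b' : ℂ} (hhw : ρ.IsHW w₀ b')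
    {p : ℂ[X]} (hp : ρ.orbitMap w₀ p = 0) (n : ℕ) :
    ((C (C b') * X + C X) * (p.map C).comp (C (-1) * X + C X)).coeff n ∈
      LinearMap.ker (ρ.orbitMap w₀) := by
  refine coeff_mem_of_exp_polynomial_mem (ι := Unit) (μ := fun _ => 1)
    (Function.injective_of_subsingleton _) (fun _ => one_ne_zero)
    (fun _ => (C (C b') * X + C X) * (p.map C).comp (C (-1) * X + C X)) _ (fun m => ?_) () n
  rw [LinearMap.mem_ker]
  have h := hhw.E_orbitMap hO m p
  rw [hp, ← zero_smul ℂ (0 : W), E_smul hO, zero_smul] at h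
  rw [h]
  simp only [Finset.univ_unique, Finset.sum_singleton, one_zpow, one_smul, eval_mul, eval_add,
    eval_C, eval_X, eval_comp, eval_map, C_mul]
  congr 1
  rw [comp, neg_one_mul, neg_add_eq_sub]
  ring

open Polynomial in
theorem IsHW.weight_ne_zero (hO : ρ.InO) (hnt : ¬ ρ.IsTrivial) (hs : ρ.IsSimple) {w₀ : W}
    {b' : ℂ} (hhw : ρ.IsHW w₀ b') : b' ≠ 0 := by
  rintro rfl
  have hD : ρ.d (-1) w₀ ≠ 0 := by
    intro h0
    refine hnt fun i hi => LinearMap.ext fun w => ?_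
    have hker : ∀ i, -1 ≤ i → ρ.d i w₀ = 0 := by
      intro i hi
      rcases lt_trichotomy i 0 with h | rfl | h
      · obtain rfl : i = -1 := by omega
        exact h0
      · rw [hhw.2.1, zero_smul]
      · exact hhw.2.2 i h
    obtain ⟨p, rfl⟩ : w ∈ LinearMap.range (ρ.orbitMap w₀) := by
      rw [hhw.range_orbitMap hs]; trivial
    have hp : ρ.orbitMap w₀ p = p.coeff 0 • w₀ := by
      conv_lhs => rw [← divX_mul_X_add p, map_add, orbitMap_C, orbitMap_apply, map_mul,
        Module.End.mul_apply, aeval_X, h0, map_zero, zero_add]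
    rw [hp, map_smul, hker i hi, smul_zero, LinearMap.zero_apply]
  have hinv : ρ.Invariant (LinearMap.range (ρ.orbitMap (ρ.d (-1) w₀))) := by
    refine ρ.invariant_range_orbitMap fun i hi => ?_
    rw [ρ.d_d_neg_one hi]
    rcases lt_trichotomy i 0 with h | rfl | h
    · obtain rfl : i = -1 := by omega
      exact ⟨X, by simp [orbitMap_X]⟩
    · exact ⟨C (-1), by simp [orbitMap_one, hhw.2.1]⟩
    · have : ρ.d (i - 1) w₀ = 0 := by
        rcases (show 0 ≤ i - 1 by omega).eq_or_lt with h' | h'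
        · rw [← h', hhw.2.1, zero_smul]
        · exact hhw.2.2 _ h'
      rw [hhw.2.2 i h, this]
      simp
  rcases hs.2 _ hinv with h | h
  · refine hD ?_
    have hmem : ρ.d (-1) w₀ ∈ LinearMap.range (ρ.orbitMap (ρ.d (-1) w₀)) :=
      ⟨1, ρ.orbitMap_one _⟩
    rwa [h, Submodule.mem_bot] at hmem
  · obtain ⟨q, hq⟩ : w₀ ∈ LinearMap.range (ρ.orbitMap (ρ.d (-1) w₀)) := by rw [h]; trivial
    have hp : ρ.orbitMap w₀ (1 - q * X) = 0 := by
      rw [map_sub, orbitMap_one, sub_eq_zero]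
      conv_lhs => rw [← hq]
      simp [orbitMap_apply, Module.End.mul_apply]
    have hne : (1 - q * X : ℂ[X]) ≠ 0 := fun h => by
      simpa using congrArg (eval 0) h
    have hmem := hhw.coeff_mem_ker_orbitMap hO hp (0 + (1 - q * X).natDegree)
    rw [map_zero, map_zero, zero_mul, zero_add, zero_add, coeff_C_mul,
      coeff_map_C_comp_linear _ (by simp), LinearMap.mem_ker, ← C_1, ← C_neg, ← C_pow, ← C_mul,
      mul_comm, orbitMap_C_mul, orbitMap_X] at hmem
    exact (smul_ne_zero (mul_ne_zero (by simpa using hne) (pow_ne_zero _ (by simp))) hD) hmem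

open Polynomial in
theorem IsHW.orbitMap_injective (hO : ρ.InO) {w₀ : W} {b' : ℂ} (hhw : ρ.IsHW w₀ b')
    (hb' : b' ≠ 0) : Function.Injective (ρ.orbitMap w₀) := by
  rw [← LinearMap.ker_eq_bot, LinearMap.ker_eq_bot']
  intro p hp
  by_contra hne
  have hmem := hhw.coeff_mem_ker_orbitMap hO hp (1 + p.natDegree)
  rw [coeff_linear_mul_map_C_comp _ (by simp), LinearMap.mem_ker, ← C_1, ← C_neg, ← C_pow,
    ← C_mul, ← C_mul, orbitMap_C] at hmem
  exact smul_ne_zero (mul_ne_zero hb' (mul_ne_zero (by simpa using hne)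
    (pow_ne_zero _ (by simp)))) hhw.1 hmem

end WittRep

section PolynomialModel

open Polynomial

/-- The action of `d_k` on the component of degree `j` of `L(W, λ, a, b)`, transported to
`ℂ[X] ≃ W`, `p ↦ p(d_{-1}) w₀`. -/
noncomputable def polyAct (lam a b b' : ℂ) (k j : ℤ) (p : ℂ[X]) : ℂ[X] :=
  lam ^ k • ((X + C ((k : ℂ) * b')) * p.comp (X - C (k : ℂ))) - X * p +
    (a + (k : ℂ) * b + (j : ℂ)) • p

/-- A family of subspaces of `ℂ[X]` stable under the operators `polyAct`. -/
def PolyClosed (lam a b b' : ℂ) (N : ℤ → Submodule ℂ ℂ[X]) : Prop :=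
  ∀ k j : ℤ, ∀ p ∈ N j, polyAct lam a b b' k j p ∈ N (k + j)

variable {lam a b b' : ℂ} {N : ℤ → Submodule ℂ ℂ[X]}

/-- The part of `d_{n-m} d_m p` that is polynomial in `m`. -/
noncomputable def polyPart (lam c b b' : ℂ) (n : ℤ) (p : ℂ[X]) : ℂ[X][X] :=
  (C (C (lam ^ n)) * ((C (C (-b')) * X + C (X + C (n * b'))) *
    (C (C (1 + b')) * X + C (X - C (n : ℂ)))) * C (p.comp (X - C (n : ℂ)))) +
  (C (C (1 - b)) * X + C (C (c + n * b) - X)) * (C (C b) * X + C (C c - X)) * C p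

/-- The coefficient of `λ ^ m` in `d_{n-m} d_m p`. -/
noncomputable def expPart (c b b' : ℂ) (n : ℤ) (p : ℂ[X]) : ℂ[X][X] :=
  (C (C (1 - b)) * X + C (C (c + n * b) - X)) *
    ((C (C b') * X + C X) * (p.map C).comp (C (-1) * X + C X))

/-- The coefficient of `λ ^ (-m)` in `d_{n-m} d_m p`. -/
noncomputable def negExpPart (lam c b b' : ℂ) (n : ℤ) (p : ℂ[X]) : ℂ[X][X] :=
  (C (C (-(lam ^ n * b'))) * X + C (C (lam ^ n) * (X + C (n * b')))) *
    ((C (C (b - 1)) * X + C (C (c + n) - X)) * (p.map C).comp (C 1 * X + C (X - C (n : ℂ))))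

theorem polyAct_polyAct (hlam : lam ≠ 0) (n m j : ℤ) (p : ℂ[X]) :
    polyAct lam a b b' (n - m) (m + j) (polyAct lam a b b' m j p) =
      (polyPart lam (a + j) b b' n p).eval (C (m : ℂ)) +
      lam ^ m • (expPart (a + j) b b' n p).eval (C (m : ℂ)) +
      lam⁻¹ ^ m • (negExpPart lam (a + j) b b' n p).eval (C (m : ℂ)) := by
  have hcomp : (p.comp (X - C (m : ℂ))).comp (X - C ((n - m : ℤ) : ℂ)) =
      p.comp (X - C (n : ℂ)) := by
    rw [comp_assoc]
    simp only [sub_comp, X_comp, C_comp]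
    push_cast
    simp only [C_sub, sub_sub, sub_add_cancel]
  have h1 : (p.map C).eval (-1 * C (m : ℂ) + X) = p.comp (X - C (m : ℂ)) := by
    rw [eval_map, comp, neg_one_mul, neg_add_eq_sub]
  have h2 : (p.map C).eval (1 * C (m : ℂ) + (X - C (n : ℂ))) =
      p.comp (X - C ((n - m : ℤ) : ℂ)) := by
    rw [eval_map, comp]
    congr 1
    push_cast
    simp only [C_sub]
    ring
  simp only [polyAct, polyPart, expPart, negExpPart, eval_mul, eval_add, eval_C, eval_X, eval_comp,
    add_comp, sub_comp, mul_comp, X_comp, C_comp, hcomp, smul_eq_C_mul, h1, h2]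
  have e1 : C (lam ^ n) = C (lam ^ (n - m)) * C (lam ^ m) := by
    rw [← C_mul, ← zpow_add₀ hlam, sub_add_cancel]
  have e2 : C (lam⁻¹ ^ m) * C (lam ^ m) = (1 : ℂ[X]) := by
    rw [← C_mul, ← mul_zpow, inv_mul_cancel₀ hlam, one_zpow, C_1]
  push_cast
  simp only [C_add, C_sub, C_mul, C_neg, C_1]
  rw [e1]
  linear_combination -(C (lam ^ (n - m)) * (X + (C (n : ℂ) - C (m : ℂ)) * C b') *
    (C a + C (m : ℂ) * C b + C (j : ℂ) - (X - C (n : ℂ) + C (m : ℂ))) *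
    p.comp (X - (C (n : ℂ) - C (m : ℂ)))) * e2

theorem coeff_expPart (c b b' : ℂ) (n : ℤ) (p : ℂ[X]) :
    (expPart c b b' n p).coeff (1 + (1 + p.natDegree)) =
      C ((1 - b) * b' * p.leadingCoeff * (-1) ^ p.natDegree) := by
  rw [expPart, coeff_linear_mul_linear_mul_map_C_comp p (by simp)]
  simp only [C_mul, C_pow, C_neg, C_1]
  ring

theorem coeff_negExpPart (lam c b b' : ℂ) (n : ℤ) (p : ℂ[X]) :
    (negExpPart lam c b b' n p).coeff (1 + (1 + p.natDegree)) =
      C ((1 - b) * b' * p.leadingCoeff * lam ^ n) := by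
  rw [negExpPart, coeff_linear_mul_linear_mul_map_C_comp p one_ne_zero]
  simp only [C_mul, C_neg, C_1, C_sub]
  ring

theorem one_mem_of_C_mem {U : Submodule ℂ ℂ[X]} {c : ℂ} (hc : c ≠ 0) (h : C c ∈ U) : 1 ∈ U := by
  have := U.smul_mem c⁻¹ h
  rwa [smul_C, smul_eq_mul, inv_mul_cancel₀ hc, C_1] at this

namespace PolyClosed

theorem polyAct_polyAct_mem (hN : PolyClosed lam a b b' N) {j : ℤ} {p : ℂ[X]} (hp : p ∈ N j)
    (n m : ℤ) : polyAct lam a b b' (n - m) (m + j) (polyAct lam a b b' m j p) ∈ N (n + j) := by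
  have h := hN (n - m) (m + j) _ (hN m j p hp)
  rwa [← add_assoc, sub_add_cancel] at h

theorem coeff_expPart_mem (hN : PolyClosed lam a b b' N) (hlam : lam ≠ 0) (h1 : lam ≠ 1)
    (h2 : lam ≠ -1) {j : ℤ} {p : ℂ[X]} (hp : p ∈ N j) (n : ℤ) (i : ℕ) :
    (expPart (a + j) b b' n p).coeff i ∈ N (n + j) := by
  have hsq : lam ≠ lam⁻¹ := fun h => by
    have : lam * lam = 1 := by
      nth_rewrite 2 [h]
      exact mul_inv_cancel₀ hlam
    exact (mul_self_eq_one_iff.1 this).elim h1 h2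
  have hinv : (1 : ℂ) ≠ lam⁻¹ := fun h => h1 (by rw [← inv_inv lam, ← h, inv_one])
  refine coeff_mem_of_exp_polynomial_mem (μ := ![1, lam, lam⁻¹]) ?_ ?_
    ![polyPart lam (a + j) b b' n p, expPart (a + j) b b' n p, negExpPart lam (a + j) b b' n p]
    _ (fun m => ?_) 1 i
  · intro x y
    fin_cases x <;> fin_cases y <;> simp [h1, h1.symm, hsq, hsq.symm, hinv, hinv.symm]
  · intro x
    fin_cases x <;> simp [hlam]
  · have h := hN.polyAct_polyAct_mem hp n m
    rw [polyAct_polyAct hlam] at h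
    simpa [Fin.sum_univ_three] using h

theorem coeff_expPart_add_mem (hN : PolyClosed (-1) a b b' N) {j : ℤ} {p : ℂ[X]} (hp : p ∈ N j)
    (n : ℤ) (i : ℕ) :
    (expPart (a + j) b b' n p + negExpPart (-1) (a + j) b b' n p).coeff i ∈ N (n + j) := by
  have hone : (1 : ℂ) ≠ -1 := by norm_num
  refine coeff_mem_of_exp_polynomial_mem (μ := ![1, -1]) ?_ ?_
    ![polyPart (-1) (a + j) b b' n p, expPart (a + j) b b' n p + negExpPart (-1) (a + j) b b' n p]
    _ (fun m => ?_) 1 i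
  · intro x y
    fin_cases x <;> fin_cases y <;> simp [hone, hone.symm]
  · intro x
    fin_cases x <;> simp
  · have h := hN.polyAct_polyAct_mem hp n m
    rw [polyAct_polyAct (by simp), inv_neg, inv_one] at h
    simpa [Fin.sum_univ_two, add_assoc] using h

/-- A stable family containing the constants in every degree is everything, for `λ ≠ 1`. -/
theorem eq_top (hN : PolyClosed lam a b b' N) (h1 : lam ≠ 1) (hone : ∀ j, 1 ∈ N j) (j : ℤ) :
    N j = ⊤ := by
  have hdeg : ∀ (n : ℕ) (j : ℤ) (p : ℂ[X]), p.natDegree < n + 1 → p ∈ N j := by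
    intro n
    induction n with
    | zero =>
      intro j p hp
      rw [eq_C_of_natDegree_eq_zero (p := p) (by omega), ← mul_one (C _), ← smul_eq_C_mul]
      exact Submodule.smul_mem _ _ (hone j)
    | succ n ih =>
      intro j p hp
      have hact : polyAct lam a b b' 1 (j - 1) (X ^ n) ∈ N j := by
        have := hN 1 (j - 1) (X ^ n) (ih (j - 1) _ (by simp))
        rwa [add_sub_cancel] at this
      have hl : (polyAct lam a b b' 1 (j - 1) (X ^ n)).natDegree ≤ n + 1 := by
        simp only [polyAct, X_pow_comp]
        compute_degree
        all_goals omega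
      have hc : (polyAct lam a b b' 1 (j - 1) (X ^ n)).coeff (n + 1) = lam - 1 := by
        have hm : ((X + C (((1 : ℤ) : ℂ) * b')) * (X - C ((1 : ℤ) : ℂ)) ^ n).coeff (n + 1) = 1 := by
          have hmon : ((X + C (((1 : ℤ) : ℂ) * b')) * (X - C ((1 : ℤ) : ℂ)) ^ n).Monic :=
            (monic_X_add_C _).mul ((monic_X_sub_C _).pow n)
          have hnd : ((X + C (((1 : ℤ) : ℂ) * b')) * (X - C ((1 : ℤ) : ℂ)) ^ n).natDegree =
              n + 1 := by
            rw [(monic_X_add_C _).natDegree_mul ((monic_X_sub_C _).pow n),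
              (monic_X_sub_C _).natDegree_pow, natDegree_X_add_C, natDegree_X_sub_C]
            ring
          rw [← hnd]
          exact hmon
        simp only [polyAct, X_pow_comp, coeff_add, coeff_sub, coeff_smul, hm, coeff_X_mul,
          coeff_X_pow_self]
        simp [coeff_X_pow]
      have hl1 : lam - 1 ≠ 0 := sub_ne_zero.2 h1
      have hsub : p - (p.coeff (n + 1) / (lam - 1)) • polyAct lam a b b' 1 (j - 1) (X ^ n) ∈
          N j := by
        refine ih j _ (Nat.lt_succ_of_le (natDegree_le_iff_coeff_eq_zero.2 fun i hi => ?_))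
        rcases (Nat.succ_le_of_lt hi).eq_or_lt with h | h
        · rw [← h, coeff_sub, coeff_smul, Nat.succ_eq_add_one, hc, smul_eq_mul,
            div_mul_cancel₀ _ hl1, sub_self]
        · rw [coeff_sub, coeff_smul, coeff_eq_zero_of_natDegree_lt (by omega),
            coeff_eq_zero_of_natDegree_lt (p := polyAct _ _ _ _ _ _ _) (by omega)]
          simp
      rw [← sub_add_cancel p ((p.coeff (n + 1) / (lam - 1)) • polyAct lam a b b' 1 (j - 1) (X ^ n))]
      exact add_mem hsub (Submodule.smul_mem _ _ hact)
  exact eq_top_iff.2 fun p _ => hdeg _ j p (Nat.lt_succ_self _)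

theorem one_mem (hN : PolyClosed lam a b b' N) (hlam : lam ≠ 0) (h1 : lam ≠ 1)
    (h2 : lam ≠ -1) (hb' : b' ≠ 0) (hb : b ≠ 1) {j : ℤ} {p : ℂ[X]} (hp : p ∈ N j) (hp0 : p ≠ 0)
    (i : ℤ) : 1 ∈ N i := by
  have h := hN.coeff_expPart_mem hlam h1 h2 hp (i - j) (1 + (1 + p.natDegree))
  rw [coeff_expPart, sub_add_cancel] at h
  refine one_mem_of_C_mem ?_ h
  exact mul_ne_zero (mul_ne_zero (mul_ne_zero (sub_ne_zero.2 hb.symm) hb') (by simpa using hp0))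
    (pow_ne_zero _ (by simp))

theorem one_mem_add (hN : PolyClosed (-1) a b b' N) (hb' : b' ≠ 0) (hb : b ≠ 1) {j : ℤ}
    {p : ℂ[X]} (hp : p ∈ N j) (hp0 : p ≠ 0) (n : ℤ) (hn : Even (n + p.natDegree)) :
    1 ∈ N (n + j) := by
  have h := hN.coeff_expPart_add_mem hp n (1 + (1 + p.natDegree))
  rw [coeff_add, coeff_expPart, coeff_negExpPart, ← C_add, ← mul_add] at h
  refine one_mem_of_C_mem (mul_ne_zero (mul_ne_zero (mul_ne_zero (sub_ne_zero.2 hb.symm) hb')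
    (by simpa using hp0)) ?_) h
  rcases Int.even_or_odd n with he | ho
  · have hd : Even p.natDegree := by
      have := (Int.even_add.1 hn).1 he
      exact_mod_cast this
    rw [hd.neg_one_pow, he.neg_one_zpow]
    norm_num
  · have hd : Odd p.natDegree := by
      rw [← Nat.not_even_iff_odd]
      intro hd
      exact Int.not_even_iff_odd.2 ho ((Int.even_add.1 hn).2 (by exact_mod_cast hd))
    rw [hd.neg_one_pow, ho.neg_one_zpow]
    norm_num

/-- For `λ = -1` and `b ≠ b' + 1`, both parities of the degree occur. -/
theorem one_mem_succ (hN : PolyClosed (-1) a b b' N) (hbb : b ≠ b' + 1) {i : ℤ}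
    (hi : a + i + b + b' ≠ 0) (hone : 1 ∈ N i) : 1 ∈ N (i + 1) := by
  set q : ℂ[X] := C 2 * X + C (-(a + i + b - b')) with hq
  have hqm : q ∈ N (i + 1) := by
    have h := hN 1 i 1 hone
    rw [add_comm] at h
    have : q = (-1 : ℂ) • polyAct (-1) a b b' 1 i 1 := by
      simp only [hq, polyAct, one_comp, mul_one, smul_eq_C_mul, zpow_one, Int.cast_one, one_mul,
        C_add, C_sub, C_neg, C_1, C_ofNat]
      ring
    rw [this]
    exact Submodule.smul_mem _ _ h
  have hcm := hN.coeff_expPart_add_mem hqm 0 2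
  rw [zero_add] at hcm
  have hc : (expPart (a + (i + 1 : ℤ)) b b' 0 q +
      negExpPart (-1) (a + (i + 1 : ℤ)) b b' 0 q).coeff 2 =
      (2 * (b - 1 + b' - b' * (b - 1))) • q + C (-2 * (b' - (b - 1)) * (a + i + b + b')) := by
    have hexp : expPart (a + (i + 1 : ℤ)) b b' 0 q + negExpPart (-1) (a + (i + 1 : ℤ)) b b' 0 q =
        C ((2 * (b - 1 + b' - b' * (b - 1))) • q +
          C (-2 * (b' - (b - 1)) * (a + i + b + b'))) * X ^ 2 +
        C (2 * X * (C (a + i + 1) - X) * q) := by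
      simp only [expPart, negExpPart, hq, Polynomial.map_add, Polynomial.map_mul, map_X, map_C,
        add_comp, mul_comp, X_comp, C_comp, smul_eq_C_mul]
      push_cast
      simp only [zpow_zero, C_add, C_sub, C_mul, C_neg, C_1, C_ofNat, C_0, zero_mul]
      ring
    rw [hexp, coeff_add, coeff_C_mul_X_pow, if_pos rfl, coeff_C_of_ne_zero two_ne_zero, add_zero]
  rw [hc] at hcm
  refine one_mem_of_C_mem ?_ ((Submodule.add_mem_iff_right _ (Submodule.smul_mem _ _ hqm)).1 hcm)
  refine mul_ne_zero (mul_ne_zero (by norm_num) ?_) hi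
  intro h
  exact hbb (by linear_combination -h)

theorem one_mem_neg_one (hN : PolyClosed (-1) a b b' N) (hb' : b' ≠ 0) (hb : b ≠ 1)
    (hbb : b ≠ b' + 1) {j : ℤ} {p : ℂ[X]} (hp : p ∈ N j) (hp0 : p ≠ 0) (i : ℤ) : 1 ∈ N i := by
  have hshift : ∀ l n : ℤ, Even n → 1 ∈ N l → 1 ∈ N (n + l) := fun l n hn h =>
    hN.one_mem_add hb' hb h one_ne_zero n (by simpa using hn)
  have hl : 1 ∈ N (p.natDegree + j) :=
    hN.one_mem_add hb' hb hp hp0 _ (by rw [← two_mul]; exact even_two_mul _)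
  obtain ⟨l, hl⟩ : ∃ l, 1 ∈ N l := ⟨_, hl⟩
  obtain ⟨l', hl', hne⟩ : ∃ l', 1 ∈ N l' ∧ a + l' + b + b' ≠ 0 := by
    by_cases h : a + l + b + b' = 0
    · refine ⟨2 + l, hshift _ _ even_two hl, fun h' => ?_⟩
      push_cast at h'
      have : (2 : ℂ) = 0 := by linear_combination h' - h
      norm_num at this
    · exact ⟨l, hl, h⟩
  have hsucc := hN.one_mem_succ hbb hne hl'
  rcases Int.even_or_odd (i - l') with he | ho
  · have := hshift l' _ he hl'
    rwa [sub_add_cancel] at this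
  · have := hshift (l' + 1) (i - (l' + 1)) (by rw [← sub_sub]; exact ho.sub_odd odd_one) hsucc
    rwa [sub_add_cancel] at this

end PolyClosed

/-- For `b = 1` the image of `p ↦ (a + j - X) p` is stable. -/
theorem polyClosed_range_sub_X (lam a b' : ℂ) :
    PolyClosed lam a 1 b' fun j =>
      LinearMap.range (LinearMap.mulLeft ℂ (C (a + j) - X : ℂ[X])) := by
  rintro k j _ ⟨p, rfl⟩
  refine ⟨lam ^ k • ((X + C ((k : ℂ) * b')) * p.comp (X - C (k : ℂ))) + (C (a + j) - X) * p, ?_⟩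
  simp only [LinearMap.mulLeft_apply, polyAct, mul_comp, sub_comp, C_comp, X_comp, smul_eq_C_mul]
  push_cast
  simp only [C_add, C_mul, C_1]
  ring

theorem polyClosed_constants (a b b' : ℂ) :
    PolyClosed 1 a b b' fun _ => LinearMap.range (CAlgHom : ℂ →ₐ[ℂ] ℂ[X]).toLinearMap := by
  rintro k j _ ⟨c, rfl⟩
  refine ⟨(k * b' + a + k * b + j) * c, ?_⟩
  simp only [AlgHom.toLinearMap_apply, CAlgHom_apply, polyAct, C_comp, one_zpow, smul_eq_C_mul,
    C_add, C_mul, C_1]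
  ring

/-- For `λ = -1`, `b = b' + 1`, the polynomials with `p(a + j - X) = (-1) ^ j p(X)` form a stable
family. -/
theorem polyClosed_reflection (a b' : ℂ) :
    PolyClosed (-1) a (b' + 1) b' fun j => LinearMap.eqLocus
      (aeval (C (a + j) - X : ℂ[X])).toLinearMap ((-1 : ℂ) ^ j • LinearMap.id) := by
  intro k j p hp
  simp only [LinearMap.mem_eqLocus, AlgHom.toLinearMap_apply, LinearMap.smul_apply,
    LinearMap.id_apply, ← comp_eq_aeval] at hp ⊢
  have h1 : (p.comp (X - C (k : ℂ))).comp (C (a + (k + j : ℤ)) - X) = (-1 : ℂ) ^ j • p := by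
    rw [comp_assoc, ← hp]
    simp only [sub_comp, X_comp, C_comp]
    push_cast
    simp only [C_add]
    congr 1
    ring
  have h2 : p.comp (C (a + (k + j : ℤ)) - X) = (-1 : ℂ) ^ j • p.comp (X - C (k : ℂ)) := by
    rw [← smul_comp, ← hp, comp_assoc]
    simp only [sub_comp, X_comp, C_comp]
    push_cast
    simp only [C_add]
    congr 1
    ring
  have hsq : C ((-1 : ℂ) ^ k) * C ((-1 : ℂ) ^ k) = (1 : ℂ[X]) := by
    rw [← C_mul, ← mul_zpow, neg_one_mul, neg_neg, one_zpow, C_1]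
  rw [zpow_add₀ (by simp)]
  simp only [polyAct, add_comp, sub_comp, mul_comp, X_comp, C_comp, smul_eq_C_mul, h1, h2]
  push_cast
  simp only [C_add, C_mul, C_1]
  linear_combination (-(C ((-1 : ℂ) ^ j) * (X + C (k : ℂ) * C b') * p.comp (X - C (k : ℂ)))) * hsq

end PolynomialModel

namespace WittRep

variable {W : Type*} [AddCommGroup W] [Module ℂ W] {ρ : WittRep W}

open Polynomial

theorem Lact_single (hO : ρ.InO) (lam a b : ℂ) (k j : ℤ) (w : W) :
    ρ.Lact lam a b k (Finsupp.single j w) = Finsupp.single (k + j)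
      (lam ^ k • ρ.E k w - ρ.d (-1) w + (a + (k : ℂ) * b + (j : ℂ)) • w) := by
  have h0 : ρ.E k 0 = 0 := by simpa using E_smul hO k 0 0
  rw [Lact, Finsupp.sum_single_index]
  simp [h0]

theorem IsHW.Lact_single_orbitMap (hO : ρ.InO) {w₀ : W} {b' : ℂ} (hhw : ρ.IsHW w₀ b')
    (lam a b : ℂ) (k j : ℤ) (p : ℂ[X]) :
    ρ.Lact lam a b k (Finsupp.single j (ρ.orbitMap w₀ p)) =
      Finsupp.single (k + j) (ρ.orbitMap w₀ (polyAct lam a b b' k j p)) := by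
  rw [Lact_single hO, hhw.E_orbitMap hO, polyAct, map_add, map_sub, map_smul, map_smul,
    orbitMap_X_mul]

theorem Lact_zero_apply (hO : ρ.InO) (lam a b : ℂ) (f : ℤ →₀ W) (l : ℤ) :
    ρ.Lact lam a b 0 f l = (a + (l : ℂ)) • f l := by
  have hterm : ∀ (j : ℤ) (w : W), Finsupp.single (0 + j) (lam ^ (0 : ℤ) • ρ.E 0 w - ρ.d (-1) w +
      (a + ((0 : ℤ) : ℂ) * b + (j : ℂ)) • w) = Finsupp.single j ((a + (j : ℂ)) • w) := by
    intro j w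
    rw [E_zero_apply hO]
    simp
  rw [Lact]
  simp only [hterm]
  rw [Finsupp.sum_apply, Finsupp.sum, Finset.sum_eq_single l]
  · simp
  · intro j _ hj
    simp [hj]
  · intro hl
    simp [Finsupp.notMem_support_iff.1 hl]

/-- Submodules of `L(W, λ, a, b)` are graded. -/
theorem single_apply_mem_of_actInvariant (hO : ρ.InO) {lam a b : ℂ} {M : Submodule ℂ (ℤ →₀ W)}
    (hM : ActInvariant (ρ.Lact lam a b) M) (j : ℤ) {f : ℤ →₀ W} (hf : f ∈ M) :
    Finsupp.single j (f j) ∈ M := by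
  induction hn : f.support.card using Nat.strong_induction_on generalizing f with
  | _ n ih =>
    by_cases h : ∃ l ∈ f.support, l ≠ j
    · obtain ⟨l, hl, hlj⟩ := h
      set g : ℤ →₀ W := ρ.Lact lam a b 0 f - (a + (l : ℂ)) • f with hg
      have hgM : g ∈ M := sub_mem (hM 0 f hf) (M.smul_mem _ hf)
      have hgi : ∀ i, g i = ((i : ℂ) - l) • f i := by
        intro i
        rw [hg, Finsupp.sub_apply, Lact_zero_apply hO, Finsupp.smul_apply]
        module
      have hcard : g.support.card < n := by
        rw [← hn]
        refine Finset.card_lt_card ((Finset.ssubset_iff_of_subset fun i hi => ?_).2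
          ⟨l, hl, by simp [hgi]⟩)
        rw [Finsupp.mem_support_iff, hgi] at hi
        exact Finsupp.mem_support_iff.2 (right_ne_zero_of_smul hi)
      have hmem := M.smul_mem ((j : ℂ) - l)⁻¹ (ih _ hcard hgM rfl)
      have hne : (j : ℂ) - l ≠ 0 := sub_ne_zero.2 (by exact_mod_cast hlj.symm)
      rwa [hgi, Finsupp.smul_single, smul_smul, inv_mul_cancel₀ hne, one_smul] at hmem
    · push Not at h
      have : f = Finsupp.single j (f j) := by
        ext i
        by_cases hi : i = j
        · subst hi; simp
        · rw [Finsupp.single_eq_of_ne hi]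
          by_contra hfi
          exact hi (h i (Finsupp.mem_support_iff.2 hfi))
      rwa [← this]

variable {w₀ : W} {lam a b b' : ℂ}

/-- A stable family of subspaces of `ℂ[X]` yields a submodule of `L(W, λ, a, b)`. -/
theorem IsHW.actInvariant_gradedSub (hO : ρ.InO) (hhw : ρ.IsHW w₀ b')
    {N : ℤ → Submodule ℂ ℂ[X]} (hN : PolyClosed lam a b b' N) :
    ActInvariant (ρ.Lact lam a b) (gradedSub fun j => (N j).map (ρ.orbitMap w₀)) := by
  have hsingle : ∀ j, ∀ w ∈ (N j).map (ρ.orbitMap w₀),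
      Finsupp.single j w ∈ gradedSub fun j => (N j).map (ρ.orbitMap w₀) := by
    intro j w hw i
    by_cases hi : i = j
    · subst hi
      simpa using hw
    · rw [Finsupp.single_eq_of_ne hi]
      exact zero_mem _
  intro k f hf
  rw [Lact]
  refine Submodule.sum_mem _ fun j _ => ?_
  beta_reduce
  rw [← Lact_single hO]
  obtain ⟨p, hp, hpf⟩ := hf j
  rw [← hpf, hhw.Lact_single_orbitMap hO]
  exact hsingle _ _ ⟨_, hN k j p hp, rfl⟩

/-- A stable family of subspaces that is neither zero nor everything contradicts simplicity. -/
theorem IsHW.not_actSimple (hO : ρ.InO) (hhw : ρ.IsHW w₀ b')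
    (hinj : Function.Injective (ρ.orbitMap w₀)) {N : ℤ → Submodule ℂ ℂ[X]}
    (hN : PolyClosed lam a b b' N) {i j : ℤ} {p q : ℂ[X]} (hp : p ∈ N i) (hp0 : p ≠ 0)
    (hq : q ∉ N j) : ¬ ActSimple (ρ.Lact lam a b) := by
  intro hs
  rcases hs.2 _ (hhw.actInvariant_gradedSub hO hN) with h | h
  · have hmem : Finsupp.single i (ρ.orbitMap w₀ p) ∈
        gradedSub fun j => (N j).map (ρ.orbitMap w₀) := by
      intro l
      by_cases hl : l = i
      · subst hl
        simpa using ⟨p, hp, rfl⟩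
      · rw [Finsupp.single_eq_of_ne hl]
        exact zero_mem _
    rw [h, Submodule.mem_bot, Finsupp.single_eq_zero] at hmem
    exact hp0 (hinj (by rw [hmem, map_zero]))
  · have hmem : Finsupp.single j (ρ.orbitMap w₀ q) ∈
        gradedSub fun j => (N j).map (ρ.orbitMap w₀) := by rw [h]; trivial
    obtain ⟨q', hq', he⟩ := hmem j
    rw [Finsupp.single_eq_same] at he
    exact hq (hinj he ▸ hq')

theorem IsHW.actSimple (hO : ρ.InO) (hhw : ρ.IsHW w₀ b')
    (hsurj : LinearMap.range (ρ.orbitMap w₀) = ⊤)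
    (h : ∀ N : ℤ → Submodule ℂ ℂ[X], PolyClosed lam a b b' N →
      ∀ (j : ℤ) (p : ℂ[X]), p ∈ N j → p ≠ 0 → ∀ i, N i = ⊤) :
    ActSimple (ρ.Lact lam a b) := by
  refine ⟨⟨Finsupp.single 0 w₀, by simpa using hhw.1⟩, fun M hM => ?_⟩
  refine or_iff_not_imp_left.2 fun hbot => ?_
  obtain ⟨f, hf, hf0⟩ := M.ne_bot_iff.1 hbot
  obtain ⟨j, hj⟩ := Finsupp.ne_iff.1 hf0
  let N : ℤ → Submodule ℂ ℂ[X] := fun j => M.comap (Finsupp.lsingle j ∘ₗ ρ.orbitMap w₀)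
  have hN : PolyClosed lam a b b' N := by
    intro k j p hp
    have := hM k _ hp
    simp only [LinearMap.comp_apply, Finsupp.lsingle_apply] at this
    rwa [hhw.Lact_single_orbitMap hO] at this
  obtain ⟨p, hp⟩ := LinearMap.range_eq_top.1 hsurj (f j)
  have htop := h N hN j p
    (by simpa [N, hp] using single_apply_mem_of_actInvariant hO hM j hf)
    (by rintro rfl; exact hj (by rw [← hp, map_zero]; rfl))
  refine eq_top_iff.2 fun g _ => ?_
  rw [← Finsupp.sum_single g]
  refine Submodule.sum_mem _ fun i _ => ?_
  obtain ⟨q, hq⟩ := LinearMap.range_eq_top.1 hsurj (g i)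
  have hmem : q ∈ N i := by rw [htop i]; trivial
  simpa [N, hq] using hmem

end WittRep

theorem stmt11 {W : Type*} [AddCommGroup W] [Module ℂ W] (ρ : WittRep W)
    (hO : ρ.InO) (hnt : ¬ ρ.IsTrivial) (hs : ρ.IsSimple)
    (lam a b b' : ℂ) (hlam : lam ≠ 0) (w₀ : W) (hhw : ρ.IsHW w₀ b') :
    ActSimple (ρ.Lact lam a b) ↔
      ((lam ≠ 1 ∧ lam ≠ -1 ∧ b ≠ 1) ∨ (lam = -1 ∧ b ≠ 1 ∧ b ≠ b' + 1)) := by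
  have hb' := hhw.weight_ne_zero hO hnt hs
  have hinj := hhw.orbitMap_injective hO hb'
  constructor
  · intro hsim
    have hb : b ≠ 1 := by
      rintro rfl
      refine hhw.not_actSimple hO hinj (polyClosed_range_sub_X lam a b') (i := 0) (j := 0)
        (q := 1) ⟨1, rfl⟩ ?_ ?_ hsim
      · rw [LinearMap.mulLeft_apply, mul_one]
        intro h
        simpa using congrArg (Polynomial.coeff · 1) h
      · rintro ⟨p, hp⟩
        simpa using congrArg (Polynomial.eval (a + ((0 : ℤ) : ℂ))) hp
    have h1 : lam ≠ 1 := by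
      rintro rfl
      refine hhw.not_actSimple hO hinj (polyClosed_constants a b b') (i := 0) (j := 0)
        (p := 1) (q := Polynomial.X) ⟨1, Polynomial.C_1⟩ one_ne_zero ?_ hsim
      rintro ⟨c, hc⟩
      simpa [Polynomial.coeff_C] using congrArg (Polynomial.coeff · 1) hc
    by_cases h2 : lam = -1
    · subst h2
      refine Or.inr ⟨rfl, hb, ?_⟩
      rintro rfl
      refine hhw.not_actSimple hO hinj (polyClosed_reflection a b') (i := 0) (j := 1)
        (p := 1) (q := 1) (by simp) one_ne_zero ?_ hsim
      intro h
      have h := congrArg (Polynomial.coeff · 0) (LinearMap.mem_eqLocus.1 h)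
      norm_num at h
    · exact Or.inl ⟨h1, h2, hb⟩
  · intro h
    refine hhw.actSimple hO (hhw.range_orbitMap hs) fun N hN j p hp hp0 => ?_
    rcases h with ⟨h1, h2, hb⟩ | ⟨rfl, hb, hbb⟩
    · exact hN.eq_top h1 (hN.one_mem hlam h1 h2 hb' hb hp hp0)
    · exact hN.eq_top (by norm_num) (hN.one_mem_neg_one hb' hb hbb hp hp0)
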